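/- Let k be an algebraically closed field, G an abelian group, and χ : G × G → kˣ a bimultiplicative map with χ(g,g) = 1 for every g ∈ G. Then there exists a bimultiplicative map σ : G × G → kˣ such that χ(g,h) = σ(g,h)·σ(h,g)⁻¹ for all g, h ∈ G. -/

import Mathlib

/-!
Additively, `χ` is a linear map `M ⊗ M → D` over `ℤ` killing every square `x ⊗ x`, and we need
`σ : M ⊗ M → D` with `χ = σ ∘ (1 - τ)`, where `τ` swaps the factors. Since `D` is divisible, hence
injective, `σ` exists as soon as `ker (1 - τ) ≤ ker χ`, so it suffices that every symmetric tensor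
is a combination of squares. A symmetric tensor comes from a symmetric tensor over a finitely
generated submodule, that is, over a finite product of cyclic modules `Cᵢ`. There the components in
`Cᵢ ⊗ Cᵢ` are multiples of the square of a generator, and those in `Cᵢ ⊗ Cⱼ` and `Cⱼ ⊗ Cᵢ` are
swapped by `τ`, so that they add up to terms
`x ⊗ y + y ⊗ x = (x + y) ⊗ (x + y) - x ⊗ x - y ⊗ y`.
-/

open TensorProduct

section FinitelyGenerated

variable {R M N : Type*} [CommSemiring R] [AddCommMonoid M] [Module R M]
  [AddCommMonoid N] [Module R N]

lemma exists_fg_lTensor_inclusion_eq {P : Submodule R N} (hP : P.FG) {s t : M ⊗[R] P}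
    (hst : P.subtype.lTensor M s = P.subtype.lTensor M t) :
    ∃ (Q : Submodule R N) (hPQ : P ≤ Q), Q.FG ∧
      (Submodule.inclusion hPQ).lTensor M s = (Submodule.inclusion hPQ).lTensor M t := by
  simp only [← LinearMap.comm_comp_rTensor_comp_comm_eq, LinearMap.comp_apply,
    LinearEquiv.coe_coe, EmbeddingLike.apply_eq_iff_eq] at hst ⊢
  exact TensorProduct.eq_of_fg_of_subtype_eq hP hst

lemma exists_fg_map_inclusion_eq {P : Submodule R M} {P' : Submodule R N} (hP : P.FG)
    (hP' : P'.FG) {s t : P ⊗[R] P'} (hst : mapIncl P P' s = mapIncl P P' t) :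
    ∃ (Q : Submodule R M) (Q' : Submodule R N) (hPQ : P ≤ Q) (hPQ' : P' ≤ Q'), Q.FG ∧ Q'.FG ∧
      map (Submodule.inclusion hPQ) (Submodule.inclusion hPQ') s =
        map (Submodule.inclusion hPQ) (Submodule.inclusion hPQ') t := by
  simp only [mapIncl, ← LinearMap.rTensor_comp_lTensor, LinearMap.comp_apply] at hst
  obtain ⟨Q, hPQ, hQ, hst⟩ := TensorProduct.eq_of_fg_of_subtype_eq hP hst
  simp only [← LinearMap.comp_apply, LinearMap.rTensor_comp_lTensor,
    ← LinearMap.lTensor_comp_rTensor] at hst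
  obtain ⟨Q', hPQ', hQ', hst⟩ := exists_fg_lTensor_inclusion_eq hP' hst
  simp only [← LinearMap.comp_apply, LinearMap.lTensor_comp_rTensor] at hst
  exact ⟨Q, Q', hPQ, hPQ', hQ, hQ', hst⟩

lemma exists_fg_comm_eq_self_mapIncl_eq {t : M ⊗[R] M} (ht : TensorProduct.comm R M M t = t) :
    ∃ Q : Submodule R M, Q.FG ∧
      ∃ s : Q ⊗[R] Q, TensorProduct.comm R Q Q s = s ∧ mapIncl Q Q s = t := by
  obtain ⟨P₁, P₂, hP₁, hP₂, ht_mem⟩ :=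
    exists_finite_submodule_of_setFinite {t} (Set.finite_singleton t)
  rw [Module.Finite.iff_fg] at hP₁ hP₂
  obtain ⟨s, rfl⟩ : t ∈ LinearMap.range (mapIncl (P₁ ⊔ P₂) (P₁ ⊔ P₂)) :=
    range_mapIncl_mono le_sup_left le_sup_right (ht_mem rfl)
  have hP := hP₁.sup hP₂
  obtain ⟨Q₁, Q₂, hPQ₁, hPQ₂, hQ₁, hQ₂, hs⟩ :=
    exists_fg_map_inclusion_eq hP hP ((map_comm _ _ s).trans ht)
  have hPQ : P₁ ⊔ P₂ ≤ Q₁ ⊔ Q₂ := hPQ₁.trans le_sup_left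
  have hs_sup := congrArg (map (Submodule.inclusion (le_sup_left : Q₁ ≤ Q₁ ⊔ Q₂))
    (Submodule.inclusion (le_sup_right : Q₂ ≤ Q₁ ⊔ Q₂))) hs
  simp only [map_map] at hs_sup
  refine ⟨Q₁ ⊔ Q₂, hQ₁.sup hQ₂,
    map (Submodule.inclusion hPQ) (Submodule.inclusion hPQ) s, ?_, map_map ..⟩
  rw [← map_comm]
  exact hs_sup

end FinitelyGenerated

/-- The submodule of `M ⊗[R] M` spanned by the squares `x ⊗ₜ x`, that is, the kernel of the
projection of `M ⊗[R] M` onto the exterior square of `M`. -/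
def tmulSelfSpan (R M : Type*) [CommSemiring R] [AddCommMonoid M] [Module R M] :
    Submodule R (M ⊗[R] M) :=
  Submodule.span R (Set.range fun x : M => x ⊗ₜ[R] x)

section Semiring

variable {R M N : Type*} [CommSemiring R] [AddCommMonoid M] [Module R M]
  [AddCommMonoid N] [Module R N]

lemma tmul_self_mem_tmulSelfSpan (x : M) : x ⊗ₜ[R] x ∈ tmulSelfSpan R M :=
  Submodule.subset_span ⟨x, rfl⟩

lemma map_mem_tmulSelfSpan (f : M →ₗ[R] N) {t : M ⊗[R] M} (ht : t ∈ tmulSelfSpan R M) :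
    map f f t ∈ tmulSelfSpan R N := by
  suffices tmulSelfSpan R M ≤ (tmulSelfSpan R N).comap (map f f) from this ht
  rw [tmulSelfSpan, Submodule.span_le]
  rintro _ ⟨x, rfl⟩
  exact tmul_self_mem_tmulSelfSpan (f x)

lemma tmulSelfSpan_eq_top_of_isPrincipal (hM : (⊤ : Submodule R M).IsPrincipal) :
    tmulSelfSpan R M = ⊤ := by
  obtain ⟨g, hg⟩ := hM.principal
  have hsmul (x : M) : ∃ a : R, a • g = x :=
    Submodule.mem_span_singleton.mp (hg ▸ Submodule.mem_top)
  rw [eq_top_iff, ← span_tmul_eq_top, Submodule.span_le]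
  rintro _ ⟨x, y, rfl⟩
  obtain ⟨a, rfl⟩ := hsmul x
  obtain ⟨b, rfl⟩ := hsmul y
  rw [smul_tmul_smul]
  exact Submodule.smul_mem _ _ (tmul_self_mem_tmulSelfSpan g)

end Semiring

lemma sum_sum_mem_of_add_swap_mem {ι A S : Type*} [AddCommMonoid A] [SetLike S A]
    [AddSubmonoidClass S A] {P : S} {f : ι → ι → A} (hdiag : ∀ i, f i i ∈ P)
    (hswap : ∀ i j, f i j + f j i ∈ P) (s : Finset ι) : ∑ i ∈ s, ∑ j ∈ s, f i j ∈ P := by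
  classical
  induction s using Finset.induction_on with
  | empty => simp only [Finset.sum_empty, zero_mem]
  | insert a s ha ih =>
    have hsplit : ∑ i ∈ insert a s, ∑ j ∈ insert a s, f i j =
        f a a + ∑ j ∈ s, (f a j + f j a) + ∑ i ∈ s, ∑ j ∈ s, f i j := by
      simp only [Finset.sum_insert ha, Finset.sum_add_distrib]
      abel
    rw [hsplit]
    exact add_mem (add_mem (hdiag a) (sum_mem fun j _ => hswap a j)) ih

section Ring

variable {R M : Type*} [CommRing R] [AddCommGroup M] [Module R M]

lemma add_swap_mem_tmulSelfSpan (t : M ⊗[R] M) :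
    t + TensorProduct.comm R M M t ∈ tmulSelfSpan R M := by
  induction t with
  | zero => simp only [map_zero, add_zero, zero_mem]
  | tmul x y =>
    have hpolar : x ⊗ₜ[R] y + y ⊗ₜ[R] x = (x + y) ⊗ₜ (x + y) - x ⊗ₜ x - y ⊗ₜ y := by
      simp only [add_tmul, tmul_add]
      abel
    rw [comm_tmul, hpolar]
    exact sub_mem (sub_mem (tmul_self_mem_tmulSelfSpan _) (tmul_self_mem_tmulSelfSpan _))
      (tmul_self_mem_tmulSelfSpan _)
  | add s t hs ht =>
    rw [map_add, add_add_add_comm]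
    exact add_mem hs ht

lemma mem_tmulSelfSpan_pi_of_comm_eq_self {ι : Type*} [Finite ι] {C : ι → Type*}
    [∀ i, AddCommGroup (C i)] [∀ i, Module R (C i)] (hC : ∀ i, tmulSelfSpan R (C i) = ⊤)
    {t : (Π i, C i) ⊗[R] (Π i, C i)} (ht : TensorProduct.comm R _ _ t = t) :
    t ∈ tmulSelfSpan R (Π i, C i) := by
  classical
  cases nonempty_fintype ι
  let e (i : ι) : (Π i, C i) →ₗ[R] (Π i, C i) := .single R C i ∘ₗ .proj i
  have hsum : ∑ i, ∑ j, map (e i) (e j) t = t := by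
    have he : ∑ i, e i = .id := LinearMap.ext fun x => by
      simp only [e, LinearMap.sum_apply, LinearMap.comp_apply, LinearMap.proj_apply,
        LinearMap.coe_single, Finset.univ_sum_single, LinearMap.id_apply]
    calc ∑ i, ∑ j, map (e i) (e j) t = map (∑ i, e i) (∑ j, e j) t := by
          simp only [← mapBilinear_apply, map_sum, LinearMap.sum_apply]
          exact Finset.sum_comm
      _ = t := by rw [he, map_id, LinearMap.id_apply]
  rw [← hsum]
  refine sum_sum_mem_of_add_swap_mem (fun i => ?_) (fun i j => ?_) Finset.univ
  · have hproj : map (.proj i) (.proj i) t ∈ tmulSelfSpan R (C i) := hC i ▸ Submodule.mem_top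
    simpa only [map_map] using map_mem_tmulSelfSpan (.single R C i) hproj
  · have hswap : map (e j) (e i) t = TensorProduct.comm R _ _ (map (e i) (e j) t) := by
      rw [← map_comm, ht]
    rw [hswap]
    exact add_swap_mem_tmulSelfSpan _

end Ring

section PrincipalIdealDomain

universe u

variable {R : Type u} {M : Type*} [CommRing R] [IsDomain R] [IsPrincipalIdealRing R]
  [AddCommGroup M] [Module R M]

variable (R M) in
lemma exists_linearEquiv_pi_quotient [Module.Finite R M] :
    ∃ (ι : Type u) (_ : Finite ι) (I : ι → Ideal R), Nonempty (M ≃ₗ[R] Π i, R ⧸ I i) := by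
  classical
  obtain ⟨n, ι, _, p, -, e, ⟨f⟩⟩ := Module.equiv_free_prod_directSum R M
  let I : Fin n ⊕ ι → Ideal R := Sum.elim (fun _ => ⊥) fun i => R ∙ p i ^ e i
  let free : (Fin n →₀ R) ≃ₗ[R] Π i, R ⧸ I (.inl i) :=
    Finsupp.linearEquivFunOnFinite R R (Fin n) ≪≫ₗ
      LinearEquiv.piCongrRight fun _ => (Submodule.quotEquivOfEqBot ⊥ rfl).symm
  let torsion := DirectSum.linearEquivFunOnFintype R ι fun i => R ⧸ I (.inr i)
  exact ⟨Fin n ⊕ ι, inferInstance, I,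
    ⟨f ≪≫ₗ free.prodCongr torsion ≪≫ₗ
      (LinearEquiv.sumPiEquivProdPi R (Fin n) ι fun s => R ⧸ I s).symm⟩⟩

lemma mem_tmulSelfSpan_of_comm_eq_self_of_finite [Module.Finite R M] {t : M ⊗[R] M}
    (ht : TensorProduct.comm R M M t = t) : t ∈ tmulSelfSpan R M := by
  obtain ⟨ι, _, I, ⟨f⟩⟩ := exists_linearEquiv_pi_quotient R M
  have hcyclic (i : ι) : tmulSelfSpan R (R ⧸ I i) = ⊤ :=
    tmulSelfSpan_eq_top_of_isPrincipal <| by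
      rw [← Submodule.range_mkQ (I i), ← Submodule.map_top]
      exact Submodule.IsPrincipal.map _ inferInstance
  have hmem : congr f f t ∈ tmulSelfSpan R (Π i, R ⧸ I i) :=
    mem_tmulSelfSpan_pi_of_comm_eq_self hcyclic <|
      (map_comm f.toLinearMap f.toLinearMap t).symm.trans (congrArg (congr f f) ht)
  rw [← (congr f f).symm_apply_apply t]
  exact map_mem_tmulSelfSpan f.symm.toLinearMap hmem

lemma mem_tmulSelfSpan_of_comm_eq_self {t : M ⊗[R] M} (ht : TensorProduct.comm R M M t = t) :
    t ∈ tmulSelfSpan R M := by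
  obtain ⟨Q, hQ, s, hs, rfl⟩ := exists_fg_comm_eq_self_mapIncl_eq ht
  have : Module.Finite R Q := Module.Finite.iff_fg.mpr hQ
  exact map_mem_tmulSelfSpan Q.subtype (mem_tmulSelfSpan_of_comm_eq_self_of_finite hs)

end PrincipalIdealDomain

lemma exists_comp_eq_of_ker_le_ker {R M N Q : Type*} [Ring R] [AddCommGroup M] [Module R M]
    [AddCommGroup N] [Module R N] [AddCommGroup Q] [Module R Q] (hQ : Module.Baer R Q)
    {f : M →ₗ[R] N} {g : M →ₗ[R] Q} (hfg : LinearMap.ker f ≤ LinearMap.ker g) :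
    ∃ h : N →ₗ[R] Q, h ∘ₗ f = g := by
  have hinj : Function.Injective ((LinearMap.ker f).liftQ f le_rfl) :=
    LinearMap.ker_eq_bot.mp (Submodule.ker_liftQ_eq_bot _ _ _ le_rfl)
  obtain ⟨h, hh⟩ := hQ.extension_property _ hinj ((LinearMap.ker f).liftQ g hfg)
  refine ⟨h, ?_⟩
  rw [← (LinearMap.ker f).liftQ_mkQ f le_rfl, ← LinearMap.comp_assoc, hh, Submodule.liftQ_mkQ]

section Bilinear

variable {R M D : Type*} [CommRing R] [AddCommGroup M] [Module R M] [AddCommGroup D] [Module R D]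

lemma tmulSelfSpan_le_ker_lift {χ : M →ₗ[R] M →ₗ[R] D} (hχ : χ.IsAlt) :
    tmulSelfSpan R M ≤ LinearMap.ker (lift χ) := by
  rw [tmulSelfSpan, Submodule.span_le]
  rintro _ ⟨x, rfl⟩
  exact hχ x

theorem exists_sub_flip_eq_of_isAlt [IsDomain R] [IsPrincipalIdealRing R] (hD : Module.Baer R D)
    {χ : M →ₗ[R] M →ₗ[R] D} (hχ : χ.IsAlt) : ∃ σ : M →ₗ[R] M →ₗ[R] D, σ - σ.flip = χ := by
  have hker : LinearMap.ker (.id - (TensorProduct.comm R M M).toLinearMap) ≤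
      LinearMap.ker (lift χ) := fun t ht =>
    tmulSelfSpan_le_ker_lift hχ (mem_tmulSelfSpan_of_comm_eq_self (sub_eq_zero.mp ht).symm)
  obtain ⟨h, hh⟩ := exists_comp_eq_of_ker_le_ker hD hker
  refine ⟨curry h, LinearMap.ext₂ fun x y => ?_⟩
  calc h (x ⊗ₜ y) - h (y ⊗ₜ x) = h (x ⊗ₜ y - y ⊗ₜ x) := (map_sub h _ _).symm
    _ = χ x y := LinearMap.congr_fun hh (x ⊗ₜ y)

end Bilinear

section Multiplicative

variable {G D : Type*} [CommGroup G] [CommGroup D]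

/-- A bimultiplicative map of commutative groups, as a `ℤ`-bilinear map of the corresponding
additive groups. -/
def bilinOfBimultiplicative (χ : G → G → D) (hχ_mul_left : ∀ a b c, χ (a * b) c = χ a c * χ b c)
    (hχ_mul_right : ∀ a b c, χ a (b * c) = χ a b * χ a c) :
    Additive G →ₗ[ℤ] Additive G →ₗ[ℤ] Additive D :=
  let right (a : Additive G) : Additive G →ₗ[ℤ] Additive D :=
    (AddMonoidHom.mk' (fun b => .ofMul (χ a.toMul b.toMul))
      fun _ _ => congrArg Additive.ofMul (hχ_mul_right _ _ _)).toIntLinearMap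
  (AddMonoidHom.mk' right fun _ _ =>
    LinearMap.ext fun _ => congrArg Additive.ofMul (hχ_mul_left _ _ _)).toIntLinearMap

lemma baer_additive_of_pow_surjective
    (hD : ∀ n : ℕ, n ≠ 0 → Function.Surjective fun d : D => d ^ n) :
    Module.Baer ℤ (Additive D) := by
  let : DivisibleBy (Additive D) ℕ := divisibleByOfSMulRightSurj _ _ (hD _)
  let : DivisibleBy (Additive D) ℤ := AddGroup.divisibleByIntOfDivisibleByNat _
  exact Module.Baer.of_divisible _

theorem exists_bimultiplicative_antisymmetrization_general
    (hD : ∀ n : ℕ, n ≠ 0 → Function.Surjective fun d : D => d ^ n) (χ : G → G → D)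
    (hχ_mul_left : ∀ a b c : G, χ (a * b) c = χ a c * χ b c)
    (hχ_mul_right : ∀ a b c : G, χ a (b * c) = χ a b * χ a c)
    (hχ_diag : ∀ g : G, χ g g = 1) :
    ∃ σ : G → G → D,
      (∀ a b c : G, σ (a * b) c = σ a c * σ b c) ∧
      (∀ a b c : G, σ a (b * c) = σ a b * σ a c) ∧
      (∀ g h : G, χ g h = σ g h * (σ h g)⁻¹) := by
  have hχ_alt : (bilinOfBimultiplicative χ hχ_mul_left hχ_mul_right).IsAlt :=
    fun g => congrArg Additive.ofMul (hχ_diag g.toMul)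
  obtain ⟨σ, hσ⟩ := exists_sub_flip_eq_of_isAlt (baer_additive_of_pow_surjective hD) hχ_alt
  refine ⟨fun a b => (σ (.ofMul a) (.ofMul b)).toMul, fun a b c => ?_, fun a b c => ?_,
    fun g h => ?_⟩
  · simp only [ofMul_mul, map_add, LinearMap.add_apply, toMul_add]
  · simp only [ofMul_mul, map_add, toMul_add]
  · have hgh := LinearMap.congr_fun₂ hσ (.ofMul g) (.ofMul h)
    rw [← div_eq_mul_inv]
    exact congrArg Additive.toMul hgh.symm

end Multiplicative

lemma units_pow_surjective_of_isAlgClosed (k : Type*) [Field k] [IsAlgClosed k] (n : ℕ)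
    (hn : n ≠ 0) : Function.Surjective fun u : kˣ => u ^ n := by
  intro u
  obtain ⟨z, hz⟩ := IsAlgClosed.exists_pow_nat_eq (u : k) hn.pos
  have hz_unit : IsUnit z := (isUnit_pow_iff hn).mp (hz ▸ u.isUnit)
  exact ⟨hz_unit.unit, Units.ext hz⟩

/- If `χ` is a bimultiplicative map on an abelian group `G` with values in `kˣ`
(`k` algebraically closed) with `χ g g = 1` for all `g`, then `χ` is the
"antisymmetrization" `σ (g,h) * σ (h,g)⁻¹` of a bimultiplicative map `σ`. -/
theorem exists_bimultiplicative_antisymmetrization {k : Type*} [Field k] [IsAlgClosed k]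
    {G : Type*} [CommGroup G] (χ : G → G → kˣ)
    (hχ_mul_left : ∀ a b c : G, χ (a * b) c = χ a c * χ b c)
    (hχ_mul_right : ∀ a b c : G, χ a (b * c) = χ a b * χ a c)
    (hχ_diag : ∀ g : G, χ g g = 1) :
    ∃ σ : G → G → kˣ,
      (∀ a b c : G, σ (a * b) c = σ a c * σ b c) ∧
      (∀ a b c : G, σ a (b * c) = σ a b * σ a c) ∧
      (∀ g h : G, χ g h = σ g h * (σ h g)⁻¹) := by
  exact exists_bimultiplicative_antisymmetrization_general
    (units_pow_surjective_of_isAlgClosed k) χ hχ_mul_left hχ_mul_right hχ_diag
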